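/- Let n ≥ 3 be an integer, g(u) = u - u^(1-4/n), and G(u) = u²/2 - (n/(2n-4)) u^(2-4/n) + 1/(n-2). Let f be a nonconstant positive periodic solution of f'' - f^(1-4/n) + f = 0 with energy c = (1/2) f'² + G(f) satisfying 0 < c < 1/(n-2), and let a, b be the unique real numbers with 0 < a < 1 < b and G(a) = G(b) = c. Then the minimal period of f equals √2 · ∫_a^b du/√(c - G(u)). -/

import Mathlib

open Real

/-- The antiderivative `G(u) = u²/2 - (n/(2n-4)) u^(2-4/n) + 1/(n-2)` of
`g(u) = u - u^(1-4/n)` vanishing at `u = 1`. -/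
noncomputable def derdzG (n : ℕ) (u : ℝ) : ℝ :=
  u ^ 2 / 2 - ((n : ℝ) / (2 * (n : ℝ) - 4)) * u ^ (2 - 4 / (n : ℝ)) + 1 / ((n : ℝ) - 2)

/-!
In the potential well `[a, b]` the solution rises from `a` to `b` on some interval `[s, t]`, with
`a < f < b` strictly inside. There `f' > 0`, so energy conservation reads `f' = √(2 (c - G ∘ f))`,
and the substitution `u = f x` gives `t - s = (√2)⁻¹ ∫_a^b du / √(c - G u)`. At `s` and `t` the
velocity vanishes, so by uniqueness for the initial value problem `f` is symmetric about both;
composing the two reflections gives the period `2 (t - s)`. A smaller period would carry the value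
`a` at `s` to a point of `(s, 2 t - s)`, where the symmetry about `t` shows that `f > a`.
-/

open Set Function OrderDual

section Ascent

/-- The function `f` rises from `a` at `s` to `b` at `t`, staying strictly between `a` and `b` in
the meantime: half an oscillation between `a` and `b`. Monotonicity on `[s, t]` is not part of the
definition. -/
structure IsAscent {α β : Type*} [Preorder α] [Preorder β] (f : α → β) (a b : β) (s t : α) :
    Prop where
  lt : s < t
  left_eq : f s = a
  right_eq : f t = b
  mapsTo : MapsTo f (Ioo s t) (Ioo a b)

variable {α β : Type*}
  [ConditionallyCompleteLinearOrder α] [TopologicalSpace α] [OrderTopology α] [DenselyOrdered α]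
  [LinearOrder β] [TopologicalSpace β] [OrderClosedTopology β]
  {f : α → β} {a b : β} {p q s t : α}

theorem exists_eq_forall_Ico_lt (hf : ContinuousOn f (Icc p q)) (hpq : p ≤ q)
    (hb : b ∈ Icc (f p) (f q)) : ∃ t ∈ Icc p q, f t = b ∧ ∀ x ∈ Ico p t, f x < b := by
  have hclosed : IsClosed (Icc p q ∩ f ⁻¹' {b}) :=
    hf.preimage_isClosed_of_isClosed isClosed_Icc isClosed_singleton
  obtain ⟨t, ⟨ht, hft⟩, hleast⟩ :=
    (isCompact_Icc.of_isClosed_subset hclosed inter_subset_left).exists_isLeast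
      (intermediate_value_Icc hpq hf hb)
  refine ⟨t, ht, hft, fun x hx ↦ not_le.mp fun hbx ↦ ?_⟩
  have hxq : x ≤ q := hx.2.le.trans ht.2
  obtain ⟨y, hy, hfy⟩ :=
    intermediate_value_Icc hx.1 (hf.mono (Icc_subset_Icc_right hxq)) ⟨hb.1, hbx⟩
  exact (hy.2.trans_lt hx.2).not_ge (hleast ⟨⟨hy.1, hy.2.trans hxq⟩, hfy⟩)

theorem exists_eq_forall_Ioc_lt (hf : ContinuousOn f (Icc p q)) (hpq : p ≤ q)
    (ha : a ∈ Icc (f p) (f q)) : ∃ s ∈ Icc p q, f s = a ∧ ∀ x ∈ Ioc s q, a < f x := by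
  have hdual : ContinuousOn (toDual ∘ f ∘ ofDual) (Icc (toDual q) (toDual p)) := by
    rwa [Icc_toDual]
  obtain ⟨s, hs, hfs, hlt⟩ := exists_eq_forall_Ico_lt hdual hpq (b := toDual a) ha.symm
  exact ⟨s, hs.symm, hfs, fun x hx ↦ hlt x hx.symm⟩

theorem exists_isAscent (hf : ContinuousOn f (Icc p q)) (hpq : p ≤ q) (hab : a < b)
    (hp : f p = a) (hq : f q = b) : ∃ s t, IsAscent f a b s t := by
  obtain ⟨t, ht, hft, hlt⟩ :=
    exists_eq_forall_Ico_lt hf hpq ⟨hp.trans_le hab.le, hq.ge⟩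
  obtain ⟨s, hs, hfs, hgt⟩ :=
    exists_eq_forall_Ioc_lt (hf.mono (Icc_subset_Icc_right ht.2)) ht.1
      ⟨hp.le, hab.le.trans_eq hft.symm⟩
  refine ⟨s, t, hs.2.lt_of_ne ?_, hfs, hft, fun x hx ↦
    ⟨hgt x ⟨hx.1, hx.2.le⟩, hlt x ⟨hs.1.trans hx.1.le, hx.2⟩⟩⟩
  rintro rfl
  exact hab.ne (hfs.symm.trans hft)

theorem IsAscent.image_Ioo (h : IsAscent f a b s t) (hf : ContinuousOn f (Icc s t)) :
    f '' Ioo s t = Ioo a b := by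
  refine h.mapsTo.image_subset.antisymm ?_
  simpa only [h.left_eq, h.right_eq] using intermediate_value_Ioo h.lt.le hf

end Ascent

section Reflection

theorem periodic_of_forall_reflection_eq {R α : Type*} [Ring R] {f : R → α} {s t : R}
    (hs : ∀ x, f (2 * s - x) = f x) (ht : ∀ x, f (2 * t - x) = f x) :
    Periodic f (2 * (t - s)) := fun x ↦ by
  rw [← hs x, ← ht (2 * s - x)]
  congr 1
  rw [mul_sub]
  abel

theorem IsAscent.two_mul_sub_le_of_periodic {f : ℝ → ℝ} {a b s t T : ℝ}
    (h : IsAscent f a b s t) (ht : ∀ x, f (2 * t - x) = f x) (hT : 0 < T) (hper : Periodic f T) :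
    2 * (t - s) ≤ T := by
  by_contra! hlt
  have hfs : f (s + T) = a := (hper s).trans h.left_eq
  have ha_lt : ∀ x ∈ Ioo s t, a < f x := fun x hx ↦ (h.mapsTo hx).1
  obtain ⟨x, hx⟩ := nonempty_Ioo.mpr h.lt
  have hab : a < b := (h.mapsTo hx).1.trans (h.mapsTo hx).2
  rcases lt_trichotomy (s + T) t with hst | hst | hst
  · exact (ha_lt (s + T) ⟨by linarith, hst⟩).ne' hfs
  · exact hab.ne (by rw [← hfs, hst, h.right_eq])
  · exact (ha_lt (2 * t - (s + T)) ⟨by linarith, by linarith⟩).ne' ((ht _).trans hfs)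

/-- The reflected curve `x ↦ f (2 s - x)` solves the same equation with the same initial data
at `s`. -/
theorem reflection_eq_of_velocity_eq_zero {E : Type*} [NormedAddCommGroup E] [NormedSpace ℝ E]
    {φ : E → E} {K : NNReal} {S : Set E} {f f' : ℝ → E} {s : ℝ} (hφ : LipschitzOnWith K φ S)
    (hf : ∀ t, HasDerivAt f (f' t) t) (hf' : ∀ t, HasDerivAt f' (φ (f t)) t)
    (hS : ∀ t, f t ∈ S) (hs : f' s = 0) (x : ℝ) : f (2 * s - x) = f x := by
  have hlip : LipschitzOnWith (max 1 (K * 1)) (fun p : E × E ↦ (p.2, φ p.1)) (S ×ˢ univ) :=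
    LipschitzWith.prod_snd.lipschitzOnWith.prodMk
      (hφ.comp LipschitzWith.prod_fst.lipschitzOnWith fun _ hp ↦ hp.1)
  have hrefl (t : ℝ) :
      HasDerivAt (fun t ↦ (f (2 * s - t), -f' (2 * s - t)))
        (-f' (2 * s - t), φ (f (2 * s - t))) t := by
    have hsub : HasDerivAt (fun t ↦ 2 * s - t) (-1) t := (hasDerivAt_id t).const_sub (2 * s)
    simpa using ((hf _).scomp t hsub).prodMk ((hf' _).scomp t hsub).neg
  have hstart : 2 * s - s = s := by ring
  have huniq := ODE_solution_unique_univ (t₀ := s) (v := fun _ p ↦ (p.2, φ p.1))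
    (g := fun t ↦ (f t, f' t)) (fun _ ↦ hlip) (fun t ↦ ⟨hrefl t, hS _, mem_univ _⟩)
    (fun t ↦ ⟨(hf t).prodMk (hf' t), hS t, mem_univ _⟩) (by simp [hstart, hs])
  exact congrArg Prod.fst (congrFun huniq x)

end Reflection

section PotentialWell

theorem setIntegral_image_one_div_sqrt_of_energy {V f f' : ℝ → ℝ} {c s t : ℝ} (hst : s ≤ t)
    (hf : ∀ x ∈ Ioo s t, HasDerivAt f (f' x) x) (hpos : ∀ x ∈ Ioo s t, 0 < f' x)
    (henergy : ∀ x ∈ Ioo s t, 1 / 2 * f' x ^ 2 + V (f x) = c) :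
    ∫ u in f '' Ioo s t, 1 / √(c - V u) = √2 * (t - s) := by
  have hmono : StrictMonoOn f (Ioo s t) :=
    strictMonoOn_of_hasDerivWithinAt_pos (convex_Ioo s t)
      (fun x hx ↦ (hf x hx).continuousAt.continuousWithinAt)
      (fun x hx ↦ (hf x (interior_subset hx)).hasDerivWithinAt)
      (fun x hx ↦ hpos x (interior_subset hx))
  have hintegrand : ∀ x ∈ Ioo s t, f' x • (1 / √(c - V (f x))) = √2 := fun x hx ↦ by
    have hkinetic : c - V (f x) = f' x ^ 2 / 2 := by linarith [henergy x hx]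
    have hne : f' x ≠ 0 := (hpos x hx).ne'
    rw [hkinetic, sqrt_div (sq_nonneg _), sqrt_sq (hpos x hx).le, smul_eq_mul]
    field_simp
  rw [MeasureTheory.integral_image_eq_integral_deriv_smul_of_monotoneOn measurableSet_Ioo
      (fun x hx ↦ (hf x hx).hasDerivWithinAt) hmono.monotoneOn,
    MeasureTheory.setIntegral_congr_fun measurableSet_Ioo hintegrand,
    MeasureTheory.setIntegral_const, Real.volume_real_Ioo_of_le hst, smul_eq_mul, mul_comm]

/-- The interval `(a, b)` is a component of the sublevel set `{V < c}` of the potential `V`: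
the region between two turning points at energy `c`. -/
structure IsPotentialWell (V : ℝ → ℝ) (c a b : ℝ) : Prop where
  lt : a < b
  left_eq : V a = c
  right_eq : V b = c
  lt_of_mem_Ioo : ∀ u ∈ Ioo a b, V u < c

theorem IsPotentialWell.eq_iff {V : ℝ → ℝ} {c a b u : ℝ} (h : IsPotentialWell V c a b)
    (hu : u ∈ Icc a b) : V u = c ↔ u = a ∨ u = b := by
  refine ⟨fun hV ↦ ?_, ?_⟩
  · by_contra! hne
    exact (h.lt_of_mem_Ioo u ⟨hu.1.lt_of_ne' hne.1, hu.2.lt_of_ne hne.2⟩).ne hV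
  · rintro (rfl | rfl)
    exacts [h.left_eq, h.right_eq]

/-- The motion `f`, with velocity `f'`, takes place in the potential well `[a, b]` and has total
energy `c`. The equation of motion itself is not imposed, so that `f` may rest at a turning
point for some time. -/
structure IsMotionInWell (V : ℝ → ℝ) (c a b : ℝ) (f f' : ℝ → ℝ) : Prop
    extends IsPotentialWell V c a b where
  hasDerivAt : ∀ t, HasDerivAt f (f' t) t
  mem_Icc : ∀ t, f t ∈ Icc a b
  energy : ∀ t, 1 / 2 * f' t ^ 2 + V (f t) = c

namespace IsMotionInWell

variable {V f f' : ℝ → ℝ} {c a b s t : ℝ}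

theorem continuous (h : IsMotionInWell V c a b f f') : Continuous f :=
  continuous_iff_continuousAt.mpr fun t ↦ (h.hasDerivAt t).continuousAt

theorem velocity_eq_zero_iff (h : IsMotionInWell V c a b f f') :
    f' t = 0 ↔ f t = a ∨ f t = b := by
  rw [← h.eq_iff (h.mem_Icc t), ← h.energy t]
  simp

theorem exists_isAscent_of_periodic (h : IsMotionInWell V c a b f f')
    (hper : ∃ T : ℝ, 0 < T ∧ Periodic f T) (hnc : ¬ ∃ A : ℝ, ∀ t, f t = A) :
    ∃ s t, IsAscent f a b s t := by
  obtain ⟨T, hT, hfT⟩ := hper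
  have hcompact : IsCompact (range f) := hfT.compact_of_continuous hT.ne' h.continuous
  obtain ⟨_, ⟨p, rfl⟩, hp⟩ := hcompact.exists_isLeast (range_nonempty f)
  obtain ⟨_, ⟨q, rfl⟩, hq⟩ := hcompact.exists_isGreatest (range_nonempty f)
  rw [mem_lowerBounds, forall_mem_range] at hp
  rw [mem_upperBounds, forall_mem_range] at hq
  have hfp : f p = a := by
    have hmin : IsLocalMin f p := .of_forall hp
    refine (h.velocity_eq_zero_iff.mp (hmin.hasDerivAt_eq_zero (h.hasDerivAt p))).resolve_right
      fun hb ↦ hnc ⟨b, fun x ↦ (h.mem_Icc x).2.antisymm (hb.symm.trans_le (hp x))⟩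
  have hfq : f q = b := by
    have hmax : IsLocalMax f q := .of_forall hq
    refine (h.velocity_eq_zero_iff.mp (hmax.hasDerivAt_eq_zero (h.hasDerivAt q))).resolve_left
      fun ha ↦ hnc ⟨a, fun x ↦ ((hq x).trans_eq ha).antisymm (h.mem_Icc x).1⟩
  obtain ⟨r, hr, hqr⟩ := hfT.exists_mem_Ico hT q p
  exact exists_isAscent h.continuous.continuousOn hr.1 h.lt hfp (hqr.symm.trans hfq)

theorem velocity_pos_of_isAscent (h : IsMotionInWell V c a b f f') (hf : IsAscent f a b s t) :
    ∀ x ∈ Ioo s t, 0 < f' x := by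
  have hne : ∀ x ∈ Ioo s t, f' x ≠ 0 := fun x hx ↦ by
    have hfx : f x ∈ Ioo a b := hf.mapsTo hx
    exact h.velocity_eq_zero_iff.not.mpr (not_or.mpr ⟨hfx.1.ne', hfx.2.ne⟩)
  obtain ⟨y, hy, hslope⟩ := exists_hasDerivAt_eq_slope f f' hf.lt h.continuous.continuousOn
    fun x _ ↦ h.hasDerivAt x
  have hy_pos : 0 < f' y := by
    rw [hslope, hf.left_eq, hf.right_eq]
    exact div_pos (sub_pos.mpr h.lt) (sub_pos.mpr hf.lt)
  exact (hasDerivWithinAt_forall_lt_or_forall_gt_of_forall_ne (convex_Ioo s t)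
    (fun x _ ↦ (h.hasDerivAt x).hasDerivWithinAt) hne).resolve_left
      fun hneg ↦ (hneg y hy).not_gt hy_pos

theorem sqrt_two_mul_integral_eq (h : IsMotionInWell V c a b f f') (hf : IsAscent f a b s t) :
    √2 * ∫ u in a..b, 1 / √(c - V u) = 2 * (t - s) := by
  rw [intervalIntegral.integral_of_le h.lt.le, MeasureTheory.integral_Ioc_eq_integral_Ioo,
    ← hf.image_Ioo h.continuous.continuousOn,
    setIntegral_image_one_div_sqrt_of_energy hf.lt.le (fun x _ ↦ h.hasDerivAt x)
      (h.velocity_pos_of_isAscent hf) fun x _ ↦ h.energy x,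
    ← mul_assoc, mul_self_sqrt zero_le_two]

theorem isLeast_period (h : IsMotionInWell V c a b f f') {φ : ℝ → ℝ} {K : NNReal}
    (hφ : LipschitzOnWith K φ (Icc a b)) (hf' : ∀ t, HasDerivAt f' (φ (f t)) t)
    (hper : ∃ T : ℝ, 0 < T ∧ Periodic f T) (hnc : ¬ ∃ A : ℝ, ∀ t, f t = A) :
    IsLeast {T : ℝ | 0 < T ∧ Periodic f T} (√2 * ∫ u in a..b, 1 / √(c - V u)) := by
  obtain ⟨s, t, hst⟩ := h.exists_isAscent_of_periodic hper hnc
  have hrefl {r : ℝ} (hr : f r = a ∨ f r = b) (x : ℝ) : f (2 * r - x) = f x :=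
    reflection_eq_of_velocity_eq_zero hφ h.hasDerivAt hf' h.mem_Icc
      (h.velocity_eq_zero_iff.mpr hr) x
  have hs := hrefl (.inl hst.left_eq)
  have ht := hrefl (.inr hst.right_eq)
  rw [h.sqrt_two_mul_integral_eq hst]
  exact ⟨⟨mul_pos two_pos (sub_pos.mpr hst.lt), periodic_of_forall_reflection_eq hs ht⟩,
    fun _ hT ↦ hst.two_mul_sub_le_of_periodic ht hT.1 hT.2⟩

end IsMotionInWell

end PotentialWell

section Unimodal

variable {α β : Type*} [LinearOrder α] [Preorder β] {V : α → β} {S : Set α} {m a b u : α}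

theorem le_iff_mem_Icc_of_strictAntiOn_of_strictMonoOn (hanti : StrictAntiOn V (S ∩ Iic m))
    (hmono : StrictMonoOn V (S ∩ Ici m)) (ha : a ∈ S ∩ Iic m) (hb : b ∈ S ∩ Ici m)
    (hab : V a = V b) (hu : u ∈ S) : V u ≤ V a ↔ u ∈ Icc a b := by
  rcases le_total u m with hum | hmu
  · rw [hanti.le_iff_ge ⟨hu, hum⟩ ha, mem_Icc, and_iff_left (hum.trans hb.2)]
  · rw [hab, hmono.le_iff_le ⟨hu, hmu⟩ hb, mem_Icc, and_iff_right (le_trans ha.2 hmu)]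

theorem lt_of_mem_Ioo_of_strictAntiOn_of_strictMonoOn (hanti : StrictAntiOn V (S ∩ Iic m))
    (hmono : StrictMonoOn V (S ∩ Ici m)) (ha : a ∈ S ∩ Iic m) (hb : b ∈ S ∩ Ici m)
    (hab : V a = V b) (hu : u ∈ S) (huab : u ∈ Ioo a b) : V u < V a := by
  rcases le_total u m with hum | hmu
  · exact hanti ha ⟨hu, hum⟩ huab.1
  · exact hab ▸ hmono ⟨hu, hmu⟩ hb huab.2

end Unimodal

section DerdzPotential

theorem exists_lipschitzOnWith_rpow_sub (r : ℝ) {a : ℝ} (ha : 0 < a) (b : ℝ) :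
    ∃ K, LipschitzOnWith K (fun u : ℝ ↦ u ^ r - u) (Icc a b) := by
  have hsmooth : ContDiffOn ℝ 1 (fun u : ℝ ↦ u ^ r - u) (Icc a b) := fun u hu ↦
    ((contDiffAt_rpow_const_of_ne (ha.trans_le hu.1).ne').sub contDiffAt_id).contDiffWithinAt
  exact hsmooth.exists_lipschitzOnWith one_ne_zero (convex_Icc a b) isCompact_Icc

variable {n : ℕ} {c a b u : ℝ}

theorem hasDerivAt_derdzG (hn₀ : n ≠ 0) (hn₂ : n ≠ 2) (hu : u ≠ 0) :
    HasDerivAt (derdzG n) (u - u ^ (1 - 4 / (n : ℝ))) u := by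
  have hcoeff : (n : ℝ) / (2 * n - 4) * (2 - 4 / n) = 1 := by
    have hn₀' : (n : ℝ) ≠ 0 := mod_cast hn₀
    have hn₂' : 2 * (n : ℝ) - 4 ≠ 0 := fun h ↦ hn₂ <| by
      have : (n : ℝ) = 2 := by linarith
      exact_mod_cast this
    rw [div_mul_eq_mul_div, div_eq_one_iff_eq hn₂']
    field_simp
  have hexp : 2 - 4 / (n : ℝ) - 1 = 1 - 4 / n := by ring
  have hsq : HasDerivAt (fun u : ℝ ↦ u ^ 2 / 2) u u := by
    simpa using (hasDerivAt_pow 2 u).div_const 2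
  have hpow := (hasDerivAt_rpow_const (p := 2 - 4 / (n : ℝ)) (.inl hu)).const_mul
    ((n : ℝ) / (2 * n - 4))
  rw [← mul_assoc, hcoeff, one_mul, hexp] at hpow
  exact (hsq.sub hpow).add_const _

theorem strictAntiOn_derdzG (hn₀ : n ≠ 0) (hn₂ : n ≠ 2) :
    StrictAntiOn (derdzG n) (Ioc 0 1) := by
  have hderiv {u : ℝ} (hu : 0 < u) := hasDerivAt_derdzG hn₀ hn₂ hu.ne'
  refine strictAntiOn_of_hasDerivWithinAt_neg (convex_Ioc 0 1)
    (fun u hu ↦ (hderiv hu.1).continuousAt.continuousWithinAt)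
    (fun u hu ↦ (hderiv (interior_subset hu).1).hasDerivWithinAt) fun u hu ↦ ?_
  rw [interior_Ioc] at hu
  have hexp : 1 - 4 / (n : ℝ) < 1 := sub_lt_self 1 (by positivity)
  exact sub_neg.mpr (self_lt_rpow_of_lt_one hu.1 hu.2 hexp)

theorem strictMonoOn_derdzG (hn₀ : n ≠ 0) (hn₂ : n ≠ 2) :
    StrictMonoOn (derdzG n) (Ici 1) := by
  have hderiv {u : ℝ} (hu : u ∈ Ici 1) :=
    hasDerivAt_derdzG hn₀ hn₂ (zero_lt_one.trans_le hu).ne'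
  refine strictMonoOn_of_hasDerivWithinAt_pos (convex_Ici 1)
    (fun u hu ↦ (hderiv hu).continuousAt.continuousWithinAt)
    (fun u hu ↦ (hderiv (interior_subset hu)).hasDerivWithinAt) fun u hu ↦ ?_
  rw [interior_Ici] at hu
  have hexp : 1 - 4 / (n : ℝ) < 1 := sub_lt_self 1 (by positivity)
  exact sub_pos.mpr (rpow_lt_self_of_one_lt hu hexp)

theorem derdzG_le_iff (hn₀ : n ≠ 0) (hn₂ : n ≠ 2) (ha : a ∈ Ioc 0 1) (hb : 1 ≤ b)
    (hab : derdzG n a = derdzG n b) (hu : 0 < u) : derdzG n u ≤ derdzG n a ↔ u ∈ Icc a b :=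
  le_iff_mem_Icc_of_strictAntiOn_of_strictMonoOn (S := Ioi 0) (strictAntiOn_derdzG hn₀ hn₂)
    ((strictMonoOn_derdzG hn₀ hn₂).mono inter_subset_right) ha ⟨zero_lt_one.trans_le hb, hb⟩ hab hu

theorem isPotentialWell_derdzG (hn₀ : n ≠ 0) (hn₂ : n ≠ 2) (ha : 0 < a) (ha1 : a < 1)
    (hb1 : 1 < b) (hGa : derdzG n a = c) (hGb : derdzG n b = c) :
    IsPotentialWell (derdzG n) c a b where
  lt := ha1.trans hb1
  left_eq := hGa
  right_eq := hGb
  lt_of_mem_Ioo _ hu := hGa ▸ lt_of_mem_Ioo_of_strictAntiOn_of_strictMonoOn (S := Ioi 0)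
    (strictAntiOn_derdzG hn₀ hn₂) ((strictMonoOn_derdzG hn₀ hn₂).mono inter_subset_right)
    ⟨ha, ha1.le⟩ ⟨zero_lt_one.trans hb1, hb1.le⟩ (hGa.trans hGb.symm) (ha.trans hu.1) hu

end DerdzPotential

/-- If `f` is a nonconstant positive periodic solution of
`f'' - f^(1-4/n) + f = 0` with energy `0 < c < 1/(n-2)` and `0 < a < 1 < b` satisfy
`G(a) = G(b) = c`, then the minimal period of `f` equals `√2 ∫_a^b du/√(c - G(u))`. -/
theorem normalized_equation_period_formula
    (n : ℕ) (hn : 3 ≤ n)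
    (f : ℝ → ℝ) (c a b : ℝ)
    (hsm : ContDiff ℝ 2 f)
    (hpos : ∀ t, 0 < f t)
    (hper : ∃ T : ℝ, 0 < T ∧ Function.Periodic f T)
    (hnc : ¬ ∃ A : ℝ, ∀ t, f t = A)
    (hode : ∀ t, deriv (deriv f) t - f t ^ (1 - 4 / (n : ℝ)) + f t = 0)
    (henergy : ∀ t, (1 / 2) * (deriv f t) ^ 2 + derdzG n (f t) = c)
    (hc₀ : 0 < c) (hc₁ : c < 1 / ((n : ℝ) - 2))
    (ha : 0 < a) (ha1 : a < 1) (hb1 : 1 < b)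
    (hGa : derdzG n a = c) (hGb : derdzG n b = c) :
    (0 < Real.sqrt 2 * ∫ u in a..b, 1 / Real.sqrt (c - derdzG n u)) ∧
    Function.Periodic f (Real.sqrt 2 * ∫ u in a..b, 1 / Real.sqrt (c - derdzG n u)) ∧
    (∀ T' : ℝ, 0 < T' → Function.Periodic f T' →
      Real.sqrt 2 * (∫ u in a..b, 1 / Real.sqrt (c - derdzG n u)) ≤ T') := by
  have hn₀ : n ≠ 0 := by lia
  have hn₂ : n ≠ 2 := by lia
  have hconfined (t : ℝ) : f t ∈ Icc a b := by
    refine (derdzG_le_iff hn₀ hn₂ ⟨ha, ha1.le⟩ hb1.le (hGa.trans hGb.symm) (hpos t)).mp ?_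
    linarith [henergy t, sq_nonneg (deriv f t)]
  have hmotion : IsMotionInWell (derdzG n) c a b f (deriv f) :=
    { isPotentialWell_derdzG hn₀ hn₂ ha ha1 hb1 hGa hGb with
      hasDerivAt := fun t ↦ (hsm.differentiable two_ne_zero t).hasDerivAt
      mem_Icc := hconfined
      energy := henergy }
  have hacceleration (t : ℝ) : HasDerivAt (deriv f) (f t ^ (1 - 4 / (n : ℝ)) - f t) t :=
    (hsm.differentiable_deriv_two t).hasDerivAt.congr_deriv (by linarith [hode t])
  obtain ⟨K, hK⟩ := exists_lipschitzOnWith_rpow_sub (1 - 4 / (n : ℝ)) ha b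
  obtain ⟨⟨hperiod_pos, hperiodic⟩, hleast⟩ := hmotion.isLeast_period hK hacceleration hper hnc
  exact ⟨hperiod_pos, hperiodic, fun T' hT' hT'per ↦ hleast ⟨hT', hT'per⟩⟩
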